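/- arXiv:2410.10507 — 3 statements merged into one kernel-verified Lean document; each statement's English description precedes it below -/
import Mathlib

section
/- Let n ≥ 1, let ρ ∈ L¹(ℝⁿ; ℝ) with ρ ≥ 0 almost everywhere, and let η : ℝⁿ → ℝ be C¹ with bounded gradient and radial nonincreasing: η(x) = η̃(‖x‖) for a C¹ function η̃ : [0,∞) → ℝ with η̃′ ≤ 0. Let ν ∈ ℝⁿ with ‖ν‖ = 1 and let x̄ ∈ ℝⁿ be such that ρ = 0 almost everywhere on the open half-space {y ∈ ℝⁿ : (y − x̄)·ν > 0}. Then (ρ ∗ ∇η)(x̄) · ν ≤ 0, where (ρ ∗ ∇η)(x̄) = ∫_{ℝⁿ} ρ(ξ) ∇η(x̄ − ξ) dξ. -/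
/-!
The inequality already holds under the integral sign. If `⟪x, ν⟫ ≥ 0`, moving from `x` in the
direction `ν` does not decrease the norm, so the radially nonincreasing `η` attains at `x` its
maximum over the segment `[x, x + ν]`, and hence `⟪∇η x, ν⟫ ≤ 0`
(`inner_gradient_nonpos_of_radial`); this treats `x = 0` on the same footing as `x ≠ 0`.
Taking `x = xb - ξ`, the condition `⟪x, ν⟫ ≥ 0` holds for almost every `ξ` with `ρ ξ ≠ 0`.
The vector integrand is integrable because `∇η` is continuous and bounded, so the inner product
with `ν` can be moved inside the integral.
-/

open MeasureTheory
open scoped ENNReal NNReal RealInnerProductSpace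

/-- The derivative of a radially nonincreasing function in a direction `ν` pointing outwards
(`⟪x, ν⟫ ≥ 0`) is nonpositive. -/
lemma inner_gradient_nonpos_of_radial {E : Type*} [NormedAddCommGroup E] [InnerProductSpace ℝ E]
    [CompleteSpace E] {η : E → ℝ} {ηt : ℝ → ℝ} (hηt : AntitoneOn ηt (Set.Ici 0))
    (hrad : ∀ x, η x = ηt ‖x‖) {x ν : E} (hη : DifferentiableAt ℝ η x) (hx : 0 ≤ ⟪x, ν⟫) :
    ⟪gradient η x, ν⟫ ≤ 0 := by
  have hmax : IsMaxOn η (segment ℝ x (x + ν)) x := by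
    intro y hy
    rw [segment_eq_image'] at hy
    obtain ⟨t, ht, rfl⟩ := hy
    simp only [add_sub_cancel_left, Set.mem_ofPred_eq, hrad]
    refine hηt (norm_nonneg _) (norm_nonneg _) ?_
    refine le_of_sq_le_sq ?_ (norm_nonneg _)
    rw [norm_add_sq_real, inner_smul_right]
    nlinarith [mul_nonneg ht.1 hx, sq_nonneg ‖t • ν‖]
  have h := hmax.localize.hasFDerivWithinAt_nonpos
    hη.hasGradientAt.hasFDerivAt.hasFDerivWithinAt
    (mem_posTangentConeAt_of_segment_subset subset_rfl)
  simpa using h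

theorem stmt_14 {n : ℕ} (hn : 1 ≤ n)
    (ρ : EuclideanSpace ℝ (Fin n) → ℝ) (hρ : Integrable ρ)
    (hρpos : ∀ᵐ ξ ∂(volume : Measure (EuclideanSpace ℝ (Fin n))), 0 ≤ ρ ξ)
    (η : EuclideanSpace ℝ (Fin n) → ℝ) (hη : ContDiff ℝ 1 η)
    (hηbd : ∃ C : ℝ, ∀ ξ, ‖gradient η ξ‖ ≤ C)
    (ηt : ℝ → ℝ) (hηt : ContDiff ℝ 1 ηt)
    (hηt' : ∀ s : ℝ, 0 ≤ s → deriv ηt s ≤ 0)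
    (hrad : ∀ x : EuclideanSpace ℝ (Fin n), η x = ηt ‖x‖)
    (ν : EuclideanSpace ℝ (Fin n)) (hν : ‖ν‖ = 1)
    (xb : EuclideanSpace ℝ (Fin n))
    (hhalf : ∀ᵐ y ∂(volume : Measure (EuclideanSpace ℝ (Fin n))),
      0 < ⟪y - xb, ν⟫ → ρ y = 0) :
    ⟪∫ ξ, ρ ξ • gradient η (xb - ξ), ν⟫ ≤ 0 := by
  have hanti : AntitoneOn ηt (Set.Ici 0) :=
    antitoneOn_of_deriv_nonpos (convex_Ici 0) hηt.continuous.continuousOn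
      (hηt.differentiable one_ne_zero).differentiableOn
      fun s hs => hηt' s (interior_subset hs)
  have hcont : Continuous fun ξ => gradient η (xb - ξ) :=
    ((InnerProductSpace.toDual ℝ _).symm.continuous.comp
      (hη.continuous_fderiv one_ne_zero)).comp (continuous_const.sub continuous_id)
  obtain ⟨C, hC⟩ := hηbd
  have hint : Integrable fun ξ => ρ ξ • gradient η (xb - ξ) :=
    hρ.smul_bdd C hcont.aestronglyMeasurable (.of_forall fun ξ => hC _)
  rw [real_inner_comm, ← integral_inner hint]
  refine integral_nonpos_of_ae ?_
  filter_upwards [hρpos, hhalf] with ξ hpos hzero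
  rw [Pi.zero_apply, inner_smul_right, real_inner_comm]
  rcases lt_or_ge 0 ⟪ξ - xb, ν⟫ with h | h
  · simp [hzero h]
  · refine mul_nonpos_of_nonneg_of_nonpos hpos
      (inner_gradient_nonpos_of_radial hanti hrad (hη.differentiable one_ne_zero _) ?_)
    rw [← neg_sub ξ xb, inner_neg_left]
    linarith
end

section
/- Let n ≥ 1, T > 0, let v : [0,T]×ℝⁿ → ℝⁿ be continuous and bounded, and let ρ ∈ C⁰([0,T]; L¹(ℝⁿ; ℝ)) be a weak solution of the continuity equation ∂_t ρ + ∇·(ρ v) = 0, i.e. for every φ ∈ C_c^∞((0,T)×ℝⁿ; ℝ): ∫₀^T ∫_{ℝⁿ} ρ(t,x)[∂_t φ(t,x) + v(t,x)·∇φ(t,x)] dx dt = 0. Let K ⊆ ℝⁿ be compact, B ⊆ ℝⁿ, and δ > 0 with dist(K, B) ≥ 3δ, and suppose that for every t ∈ [0,T], ρ(t) = 0 almost everywhere outside K ∪ B. Then the function t ↦ ∫_{K_δ} ρ(t,x) dx is constant on [0,T], where K_δ = {x ∈ ℝⁿ : dist(x, K) ≤ δ}. -/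
/-!
The mass near `K` can be computed with a smooth cutoff `χ`, equal to `1` on `K_δ` and to `0` outside
the open `3δ`-neighbourhood of `K`, hence on `B`. As `ρ t` is carried by `K ∪ B`, where `χ` attains
its maximum `1` or its minimum `0`, one has `∫_{K_δ} ρ t = ∫ ρ t · χ` and `ρ t · ∇χ = 0` almost
everywhere. Testing the equation with `φ (t, x) = η t · χ x` therefore kills the transport term and
leaves `∫₀ᵀ η' m = 0`, where `m t` is the mass in `K_δ`. Since `m` is continuous
(`L¹`-continuity of `ρ`), the du Bois-Reymond lemma `eq_const_of_integral_deriv_mul_eq_zero` shows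
that `m` is constant on `[0, T]`.
-/

open MeasureTheory
open scoped ENNReal NNReal

/-- Du Bois-Reymond lemma on `[0, T]`: a continuous function whose weak derivative vanishes is
constant. The test functions are smooth and vanish outside `(0, T)`. -/
lemma eq_const_of_integral_deriv_mul_eq_zero {T : ℝ} (hT : 0 < T) {m : ℝ → ℝ}
    (hm : ContinuousOn m (Set.Icc 0 T))
    (h : ∀ η : ℝ → ℝ, ContDiff ℝ (⊤ : ℕ∞) η → (∀ t, t ≤ 0 ∨ T ≤ t → η t = 0) →
      ∫ t in Set.Ioo 0 T, deriv η t * m t = 0) :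
    ∃ c, ∀ t ∈ Set.Icc 0 T, m t = c := by
  let b : ContDiffBump (T / 2) := ⟨T / 8, T / 4, by linarith, by linarith⟩
  -- A fixed test function of integral one, used to correct the mean of other test functions.
  set ψ₀ : ℝ → ℝ := b.normed volume with hψ₀
  have hψ₀s : ContDiff ℝ (⊤ : ℕ∞) ψ₀ := b.contDiff_normed
  have hψ₀i : ∫ t, ψ₀ t = 1 := b.integral_normed
  have hψ₀z : ∀ t, t ∉ Set.Ioo 0 T → ψ₀ t = 0 := by
    intro t ht
    by_contra hne
    have : t ∈ Function.support ψ₀ := hne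
    rw [hψ₀, b.support_normed_eq, Metric.mem_ball, Real.dist_eq, abs_lt] at this
    have h1 : b.rOut = T / 4 := rfl
    rw [h1] at this
    exact ht ⟨by linarith [this.1], by linarith [this.2]⟩
  have hint : ∀ g : ℝ → ℝ, Continuous g → IntegrableOn (fun t => g t * m t) (Set.Ioo 0 T) :=
    fun g hg => ((hg.continuousOn.mul hm).integrableOn_Icc).mono_set Set.Ioo_subset_Icc_self
  have hint' : ∀ g : ℝ → ℝ, Continuous g → IntegrableOn g (Set.Ioo 0 T) :=
    fun g hg => (hg.continuousOn.integrableOn_Icc).mono_set Set.Ioo_subset_Icc_self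
  have hres : ∀ g : ℝ → ℝ, (∀ t, t ∉ Set.Ioo 0 T → g t = 0) →
      ∫ t in Set.Ioo 0 T, g t = ∫ t, g t :=
    fun g hg => setIntegral_eq_integral_of_forall_compl_eq_zero hg
  set c : ℝ := ∫ t in Set.Ioo 0 T, ψ₀ t * m t with hc
  refine ⟨c, ?_⟩
  have hae : ∀ᵐ t, t ∈ Set.Ioo 0 T → m t - c = 0 := by
    refine isOpen_Ioo.ae_eq_zero_of_integral_contDiff_smul_eq_zero ?_ ?_
    · exact ((hm.sub continuousOn_const).mono Set.Ioo_subset_Icc_self).locallyIntegrableOn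
        measurableSet_Ioo
    intro g hg _ hgs
    have hgz : ∀ t, t ∉ Set.Ioo 0 T → g t = 0 :=
      fun t ht => image_eq_zero_of_notMem_tsupport fun h' => ht (hgs h')
    set I : ℝ := ∫ t, g t with hI
    set ψ : ℝ → ℝ := fun t => g t - I * ψ₀ t with hψ
    have hψs : ContDiff ℝ (⊤ : ℕ∞) ψ := hg.sub (contDiff_const.mul hψ₀s)
    have hψz : ∀ t, t ∉ Set.Ioo 0 T → ψ t = 0 := by
      intro t ht; simp [hψ, hgz t ht, hψ₀z t ht]
    have hψi : ∫ t in Set.Ioo 0 T, ψ t = 0 := by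
      have e : ∫ t in Set.Ioo 0 T, ψ t
          = (∫ t in Set.Ioo 0 T, g t) - I * ∫ t in Set.Ioo 0 T, ψ₀ t := by
        rw [← integral_const_mul, ← integral_sub (hint' g hg.continuous)
          ((hint' ψ₀ hψ₀s.continuous).const_mul I)]
      rw [e, hres g hgz, hres ψ₀ hψ₀z, hψ₀i]
      ring
    have hder : ∀ t, HasDerivAt (fun u => ∫ x in (0 : ℝ)..u, ψ x) (ψ t) t :=
      fun t => (hψs.continuous.integral_hasStrictDerivAt 0 t).hasDerivAt
    have hderiv : deriv (fun u => ∫ x in (0 : ℝ)..u, ψ x) = ψ := funext fun t => (hder t).deriv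
    have key := h (fun u => ∫ x in (0 : ℝ)..u, ψ x) ?_ ?_
    · rw [hderiv] at key
      have e : ∫ t in Set.Ioo 0 T, ψ t * m t
          = (∫ t in Set.Ioo 0 T, g t * m t) - I * c := by
        rw [hc, ← integral_const_mul, ← integral_sub (hint g hg.continuous)
          ((hint ψ₀ hψ₀s.continuous).const_mul I)]
        congr 1; ext t; simp only [hψ]; ring
      rw [← hres _ (fun t ht => by simp [hgz t ht])]
      have e2 : ∫ t in Set.Ioo 0 T, g t • (m t - c)
          = (∫ t in Set.Ioo 0 T, g t * m t) - (∫ t in Set.Ioo 0 T, g t) * c := by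
        rw [← integral_mul_const, ← integral_sub (hint g hg.continuous)
          ((hint' g hg.continuous).mul_const c)]
        congr 1; ext t; simp only [smul_eq_mul]; ring
      rw [e2, hres g hgz]
      linarith
    · exact contDiff_infty_iff_deriv.2 ⟨fun t => (hder t).differentiableAt, by rwa [hderiv]⟩
    · rintro t (ht | ht)
      · refine intervalIntegral.integral_zero_ae (.of_forall fun x hx => hψz x fun hx' => ?_)
        rw [Set.uIoc_of_ge ht] at hx
        exact absurd hx.2 (not_le.2 hx'.1)
      · show (∫ x in (0 : ℝ)..t, ψ x) = 0
        rw [intervalIntegral.integral_of_le (hT.le.trans ht)]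
        refine Eq.trans (setIntegral_eq_of_subset_of_forall_sdiff_eq_zero measurableSet_Ioc
          (fun x hx => ⟨hx.1, hx.2.le.trans ht⟩) (fun x hx => hψz x hx.2)) hψi
  refine Measure.eqOn_Icc_of_ae_eq (μ := volume) hT.ne ?_ hm continuousOn_const
  rw [← restrict_Ioo_eq_restrict_Icc]
  refine (ae_restrict_iff' measurableSet_Ioo).2 ?_
  filter_upwards [hae] with t ht ht' using sub_eq_zero.1 (ht ht')

/-- A smooth cutoff equal to `1` on `K_δ`, to `0` on `B`, with values in `[0, 1]`. -/
lemma exists_cutoff {E : Type*} [NormedAddCommGroup E] [NormedSpace ℝ E] [FiniteDimensional ℝ E]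
    {K B : Set E} (hK : IsCompact K) {δ : ℝ} (hδ : 0 < δ)
    (hdist : ∀ a ∈ K, ∀ b ∈ B, 3 * δ ≤ dist a b) :
    ∃ χ : E → ℝ, ContDiff ℝ (⊤ : ℕ∞) χ ∧ HasCompactSupport χ ∧ (∀ x, χ x ∈ Set.Icc 0 1) ∧
      (∀ x ∈ Metric.cthickening δ K, χ x = 1) ∧ ∀ x ∈ B, χ x = 0 := by
  have hd : Disjoint (Metric.thickening (3 * δ) K)ᶜ (Metric.cthickening δ K) :=
    Set.disjoint_compl_left_iff_subset.2
      (Metric.cthickening_subset_thickening' (by linarith) (by linarith) K)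
  obtain ⟨f, hf0, hf1, hf⟩ := exists_contMDiffMap_zero_one_of_isClosed (n := (⊤ : ℕ∞))
    (modelWithCornersSelf ℝ E) Metric.isOpen_thickening.isClosed_compl
    Metric.isClosed_cthickening hd
  refine ⟨f, f.contMDiff.contDiff, ?_, hf, fun x hx => hf1 hx, fun x hx => hf0 fun hx' => ?_⟩
  · exact HasCompactSupport.intro (hK.cthickening (r := 3 * δ)) fun x hx =>
      hf0 fun hx' => hx (Metric.thickening_subset_cthickening _ _ hx')
  · obtain ⟨a, ha, hxa⟩ := Metric.mem_thickening_iff.1 hx'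
    have := hdist a ha x hx
    rw [dist_comm] at this
    linarith


theorem stmt_15 {n : ℕ} (hn : 1 ≤ n) (T : ℝ) (hT : 0 < T)
    (v : ℝ × EuclideanSpace ℝ (Fin n) → EuclideanSpace ℝ (Fin n))
    (hv : Continuous v) (hvbd : ∃ C : ℝ, ∀ p, ‖v p‖ ≤ C)
    (ρ : ℝ → EuclideanSpace ℝ (Fin n) → ℝ)
    (hρInt : ∀ t ∈ Set.Icc (0 : ℝ) T, Integrable (ρ t))
    (hρCont : ∀ s ∈ Set.Icc (0 : ℝ) T,
      Filter.Tendsto (fun t => eLpNorm (fun x => ρ t x - ρ s x) 1 volume)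
        (nhdsWithin s (Set.Icc 0 T)) (nhds 0))
    (hweak : ∀ φ : ℝ × EuclideanSpace ℝ (Fin n) → ℝ,
      ContDiff ℝ (⊤ : ℕ∞) φ → HasCompactSupport φ →
      (∀ t : ℝ, ∀ x : EuclideanSpace ℝ (Fin n), t ≤ 0 ∨ T ≤ t → φ (t, x) = 0) →
      (∫ t in Set.Ioo (0 : ℝ) T, ∫ x, ρ t x *
          (fderiv ℝ φ (t, x) (1, 0) +
            ∑ j, v (t, x) j * fderiv ℝ φ (t, x) (0, EuclideanSpace.single j 1))) = 0)
    (K : Set (EuclideanSpace ℝ (Fin n))) (hK : IsCompact K)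
    (B : Set (EuclideanSpace ℝ (Fin n))) (δ : ℝ) (hδ : 0 < δ)
    (hdist : ∀ a ∈ K, ∀ b ∈ B, 3 * δ ≤ dist a b)
    (hsupp : ∀ t ∈ Set.Icc (0 : ℝ) T,
      ∀ᵐ x ∂(volume : Measure (EuclideanSpace ℝ (Fin n))), x ∉ K ∪ B → ρ t x = 0) :
    ∀ t₁ ∈ Set.Icc (0 : ℝ) T, ∀ t₂ ∈ Set.Icc (0 : ℝ) T,
      ∫ x in Metric.cthickening δ K, ρ t₁ x =
        ∫ x in Metric.cthickening δ K, ρ t₂ x := by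
  obtain ⟨χ, hχs, hχc, hχ, hχ1, hχ0⟩ := exists_cutoff hK hδ hdist
  -- `χ` has an extremum wherever it takes the value `0` or `1`.
  have hgrad : ∀ x, x ∈ K ∪ B → fderiv ℝ χ x = 0 := by
    rintro x (hx | hx)
    · refine IsLocalMax.fderiv_eq_zero (.of_forall fun y => ?_)
      rw [hχ1 x (Metric.self_subset_cthickening K hx)]
      exact (hχ y).2
    · refine IsLocalMin.fderiv_eq_zero (.of_forall fun y => ?_)
      rw [hχ0 x hx]
      exact (hχ y).1
  have hmass : ∀ t ∈ Set.Icc (0 : ℝ) T,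
      ∫ x in Metric.cthickening δ K, ρ t x = ∫ x, ρ t x * χ x := by
    intro t ht
    rw [← integral_indicator Metric.isClosed_cthickening.measurableSet]
    refine integral_congr_ae ?_
    filter_upwards [hsupp t ht] with x hx
    by_cases hxK : x ∈ Metric.cthickening δ K
    · simp [hxK, hχ1 x hxK]
    · rw [Set.indicator_of_notMem hxK]
      by_cases hxB : x ∈ B
      · simp [hχ0 x hxB]
      · rw [hx, zero_mul]
        rintro (h | h)
        · exact hxK (Metric.self_subset_cthickening K h)
        · exact hxB h
  have hcont : ContinuousOn (fun t => ∫ x in Metric.cthickening δ K, ρ t x) (Set.Icc 0 T) := by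
    intro s hs
    refine tendsto_setIntegral_of_L1' (ρ s) (hρInt s hs).aestronglyMeasurable ?_ (hρCont s hs) _
    filter_upwards [self_mem_nhdsWithin] with t ht using hρInt t ht
  obtain ⟨c, hc⟩ := eq_const_of_integral_deriv_mul_eq_zero hT hcont (by
    intro η hη hη0
    have hφs : ContDiff ℝ (⊤ : ℕ∞)
        (fun p : ℝ × EuclideanSpace ℝ (Fin n) => η p.1 * χ p.2) :=
      (hη.comp contDiff_fst).mul (hχs.comp contDiff_snd)
    have hφc : HasCompactSupport (fun p : ℝ × EuclideanSpace ℝ (Fin n) => η p.1 * χ p.2) := by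
      refine HasCompactSupport.intro ((isCompact_Icc (a := (0 : ℝ)) (b := T)).prod hχc)
        fun p hp => ?_
      by_cases h1 : p.1 ∈ Set.Icc 0 T
      · have : p.2 ∉ tsupport χ := fun h2 => hp ⟨h1, h2⟩
        simp [image_eq_zero_of_notMem_tsupport this]
      · have : p.1 ≤ 0 ∨ T ≤ p.1 := by
          by_contra! h3
          exact h1 ⟨h3.1.le, h3.2.le⟩
        simp [hη0 _ this]
    refine Eq.trans ?_ (hweak _ hφs hφc (fun t x ht => by simp [hη0 t ht]))
    refine setIntegral_congr_fun measurableSet_Ioo fun t ht => ?_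
    have ht' := Set.Ioo_subset_Icc_self ht
    simp only
    rw [hmass t ht', ← integral_const_mul]
    refine integral_congr_ae ?_
    filter_upwards [hsupp t ht'] with x hx
    by_cases hxKB : x ∈ K ∪ B
    · have h1 : HasFDerivAt (fun p : ℝ × EuclideanSpace ℝ (Fin n) => η p.1)
          ((fderiv ℝ η t).comp (ContinuousLinearMap.fst ℝ ℝ (EuclideanSpace ℝ (Fin n)))) (t, x) :=
        ((hη.differentiable (by simp)) t).hasFDerivAt.comp (t, x) hasFDerivAt_fst
      have h2 : HasFDerivAt (fun p : ℝ × EuclideanSpace ℝ (Fin n) => χ p.2)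
          ((fderiv ℝ χ x).comp (ContinuousLinearMap.snd ℝ ℝ (EuclideanSpace ℝ (Fin n)))) (t, x) :=
        ((hχs.differentiable (by simp)) x).hasFDerivAt.comp (t, x) hasFDerivAt_snd
      have h3 := (h1.fun_mul h2).fderiv
      rw [h3, hgrad x hxKB]
      simp
      ring
    · simp [hx hxKB])
  intro t₁ ht₁ t₂ ht₂
  exact (hc t₁ ht₁).trans (hc t₂ ht₂).symm
end

section
/- Let n ≥ 1, let v : ℝ×ℝⁿ → ℝⁿ be C¹ with v and all its first derivatives bounded, and let X : ℝ×ℝ×ℝⁿ → ℝⁿ be a C¹ map satisfying: X(t₀; t₀, x) = x, ∂_t X(t; t₀, x) = v(t, X(t; t₀, x)), and X(t₂; t₁, X(t₁; t₀, x)) = X(t₂; t₀, x) for all times and all x. Let ρ₀ ∈ L¹(ℝⁿ; ℝ) and define ρ(t,x) = ρ₀(X(0; t, x)) · exp(−∫₀^t (∇·v)(τ, X(τ; t, x)) dτ). Then for every t ∈ ℝ, ρ(t,·) ∈ L¹(ℝⁿ; ℝ) and ∫_{ℝⁿ} |ρ(t,x)| dx = ∫_{ℝⁿ} |ρ₀(x)|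 dx. -/
/-!
For fixed `t` the map `X 0 t` is a `C¹` bijection of `ℝⁿ` with inverse `X t 0`, so the theorem is
the change of variables formula once its Jacobian determinant is identified with the exponential
factor in `ρ` (Liouville's formula).

Differentiating `X s t x = x + ∫_t^s v(τ, X τ t x) dτ` in `x` under the integral sign shows that
`J(s) = D_x X(s; t, x)` solves the variational equation `J' = D_x v(s, X s t x) ∘ J`, `J(t) = id`
(`hasDerivAt_fderiv_flow`). Jacobi's formula for the derivative of a determinant
(`hasDerivAt_det_of_comp`) turns this into the scalar equation `(det J)' = (∇·v) det J`, hence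
`det J(s) = exp (∫_t^s (∇·v)(τ, X τ t x) dτ)` (`det_fderiv_flow`), which is used at `s = 0`.
-/

open MeasureTheory
open scoped ENNReal NNReal

/-- The spatial divergence `(∇·v)(t, x)` of the time-dependent vector field `v`. -/
noncomputable def divv {n : ℕ}
    (v : ℝ × EuclideanSpace ℝ (Fin n) → EuclideanSpace ℝ (Fin n))
    (t : ℝ) (x : EuclideanSpace ℝ (Fin n)) : ℝ :=
  ∑ j, fderiv ℝ (fun y => v (t, y) j) x (EuclideanSpace.single j 1)

section Det

variable {n : ℕ}

local notation "E" => EuclideanSpace ℝ (Fin n)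

lemma differentiable_clm_det : Differentiable ℝ (fun L : E →L[ℝ] E => L.det) := by
  have h : (fun L : E →L[ℝ] E => L.det) = fun L => ∑ σ : Equiv.Perm (Fin n),
      ((Equiv.Perm.sign σ : ℤ) : ℝ) * ∏ i, (L (EuclideanSpace.single i 1)) (σ i) := by
    funext L
    rw [ContinuousLinearMap.det,
      ← LinearMap.det_toMatrix (EuclideanSpace.basisFun (Fin n) ℝ).toBasis, Matrix.det_apply']
    simp [LinearMap.toMatrix_apply]
  rw [h]
  have h2 : ∀ i j : Fin n,
      Differentiable ℝ (fun L : E →L[ℝ] E => (L (EuclideanSpace.single i 1)) j) := by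
    intro i j
    exact (((EuclideanSpace.proj (𝕜 := ℝ) j).comp
      (ContinuousLinearMap.apply ℝ E (EuclideanSpace.single i (1 : ℝ))))).differentiable
  fun_prop

/-- The determinant of `id + r A` has derivative `tr A` at `r = 0`. -/
lemma hasDerivAt_det_one_add_smul (A : E →L[ℝ] E) :
    HasDerivAt (fun r : ℝ => (ContinuousLinearMap.id ℝ E + r • A).det)
      (LinearMap.trace ℝ E A) 0 := by
  set b := (EuclideanSpace.basisFun (Fin n) ℝ).toBasis
  set M := LinearMap.toMatrix b b (A : E →ₗ[ℝ] E) with hM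
  have h : (fun r : ℝ => (ContinuousLinearMap.id ℝ E + r • A).det) = fun r =>
      1 + M.trace * r + (Matrix.det (1 + (Polynomial.X : Polynomial ℝ) •
        M.map Polynomial.C)).divX.divX.eval r * r ^ 2 := by
    funext r
    rw [← Matrix.det_one_add_smul, ContinuousLinearMap.det, ← LinearMap.det_toMatrix b]
    congr 1
    simp [hM, map_add]
  rw [h, LinearMap.trace_eq_matrix_trace ℝ b]
  generalize (Matrix.det (1 + (Polynomial.X : Polynomial ℝ) •
        M.map Polynomial.C)).divX.divX = p
  have h1 := ((hasDerivAt_id (0 : ℝ)).const_mul M.trace).const_add 1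
  have h2 := (p.hasDerivAt 0).mul ((hasDerivAt_id (0 : ℝ)).pow 2)
  have h3 := h1.add h2
  refine h3.congr_deriv ?_
  simp [hM]

/-- Jacobi's formula: along a solution of `L' = A ∘ L` one has `(det L)' = tr A * det L`. -/
lemma hasDerivAt_det_of_comp {L : ℝ → E →L[ℝ] E} {A : E →L[ℝ] E} {s : ℝ}
    (hL : HasDerivAt L (A.comp (L s)) s) :
    HasDerivAt (fun r => (L r).det) (LinearMap.trace ℝ E A * (L s).det) s := by
  have hd := (differentiable_clm_det (L s)).hasFDerivAt
  have h1 := hd.comp_hasDerivAt s hL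
  -- The value of the differential of `det` in the direction `A ∘ L s` is read off along the line
  -- `r ↦ L s + r • A ∘ L s = (id + r • A) ∘ L s`.
  have hline : HasDerivAt (fun r : ℝ => L s + r • A.comp (L s)) (A.comp (L s)) 0 := by
    simpa using ((hasDerivAt_id (0 : ℝ)).smul_const (A.comp (L s))).const_add (L s)
  have hd' : HasFDerivAt (fun L : E →L[ℝ] E => L.det)
      (fderiv ℝ (fun L : E →L[ℝ] E => L.det) (L s)) (L s + (0 : ℝ) • A.comp (L s)) := by
    have h0 : L s + (0 : ℝ) • A.comp (L s) = L s := by ext; simp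
    rwa [h0]
  have h2 := hd'.comp_hasDerivAt (0 : ℝ) hline
  have h3 := (hasDerivAt_det_one_add_smul A).mul_const (L s).det
  have h4 : ((fun L : E →L[ℝ] E => L.det) ∘ fun r : ℝ => L s + r • A.comp (L s)) =
      fun r : ℝ => (ContinuousLinearMap.id ℝ E + r • A).det * (L s).det := by
    funext r
    have : L s + r • A.comp (L s) = (ContinuousLinearMap.id ℝ E + r • A).comp (L s) := by
      ext; simp
    simp only [Function.comp, this]
    exact LinearMap.det_comp _ _
  rw [h4] at h2
  rw [← h2.unique h3]
  exact h1

lemma divv_eq_trace {v : ℝ × E → E} (hv : ContDiff ℝ 1 v) (t : ℝ) (x : E) :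
    divv v t x = LinearMap.trace ℝ E (fderiv ℝ (fun y => v (t, y)) x) := by
  have hd : DifferentiableAt ℝ (fun y => v (t, y)) x :=
    ((hv.differentiable one_ne_zero).comp (by fun_prop : Differentiable ℝ fun y : E => (t, y))) x
  rw [LinearMap.trace_eq_sum_inner _ (EuclideanSpace.basisFun (Fin n) ℝ), divv]
  refine Finset.sum_congr rfl fun j _ => ?_
  have h := ((EuclideanSpace.proj j : E →L[ℝ] ℝ).hasFDerivAt.comp x
    hd.hasFDerivAt).fderiv
  have h' : (fun y => v (t, y) j) =
    (EuclideanSpace.proj j : E →L[ℝ] ℝ) ∘ fun y => v (t, y) := rfl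
  rw [h', h]
  simp [EuclideanSpace.inner_single_left]

end Det

section Flow

variable {n : ℕ}

local notation "E" => EuclideanSpace ℝ (Fin n)

lemma continuous_fderiv_field {v : ℝ × E → E} (hv : ContDiff ℝ 1 v) :
    Continuous fun p : ℝ × E => fderiv ℝ (fun y => v (p.1, y)) p.2 := by
  have h : ContDiff ℝ 0 fun p : ℝ × E => fderiv ℝ ((fun p y => v (p.1, y)) p) p.2 :=
    ContDiff.fderiv (f := fun (p : ℝ × E) y => v (p.1, y)) (m := 1)
      (hv.comp (by fun_prop : ContDiff ℝ 1 fun q : (ℝ × E) × E => (q.1.1, q.2)))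
      contDiff_snd (by simp)
  exact h.continuous

lemma contDiff_flow_slice {X : ℝ → ℝ → E → E}
    (hXsm : ContDiff ℝ 1 (fun q : ℝ × ℝ × E => X q.1 q.2.1 q.2.2)) (t : ℝ) :
    ContDiff ℝ 1 fun p : ℝ × E => X p.1 t p.2 :=
  hXsm.comp (by fun_prop : ContDiff ℝ 1 fun p : ℝ × E => (p.1, t, p.2))

/-- The variational equation satisfied by the spatial differential of the flow. -/
lemma hasDerivAt_fderiv_flow {v : ℝ × E → E} (hv : ContDiff ℝ 1 v) {X : ℝ → ℝ → E → E}
    (hXsm : ContDiff ℝ 1 (fun q : ℝ × ℝ × E => X q.1 q.2.1 q.2.2))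
    (hX0 : ∀ t₀ x, X t₀ t₀ x = x)
    (hXd : ∀ t t₀ x, HasDerivAt (fun s => X s t₀ x) (v (t, X t t₀ x)) t) (t s : ℝ) (x : E) :
    HasDerivAt (fun s => fderiv ℝ (X s t) x)
      ((fderiv ℝ (fun y => v (s, y)) (X s t x)).comp (fderiv ℝ (X s t) x)) s := by
  have hY := contDiff_flow_slice hXsm t
  have hYc : Continuous fun p : ℝ × E => X p.1 t p.2 := hY.continuous
  have hvc := hv.continuous
  set F' : E → ℝ → E →L[ℝ] E := fun y τ =>
    (fderiv ℝ (fun z => v (τ, z)) (X τ t y)).comp (fderiv ℝ (X τ t) y) with hF'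
  have hF'c : Continuous fun p : ℝ × E => F' p.2 p.1 := by
    have h1 : Continuous fun p : ℝ × E => fderiv ℝ (fun z => v (p.1, z)) (X p.1 t p.2) :=
      (continuous_fderiv_field hv).comp (continuous_fst.prodMk hYc)
    have h2 : Continuous fun p : ℝ × E => fderiv ℝ (X p.1 t) p.2 := continuous_fderiv_field hY
    exact h1.clm_comp h2
  have hdiff : ∀ τ y, HasFDerivAt (fun y => v (τ, X τ t y)) (F' y τ) y := by
    intro τ y
    have h1 : DifferentiableAt ℝ (fun z => v (τ, z)) (X τ t y) :=
      ((hv.differentiable one_ne_zero).comp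
        (by fun_prop : Differentiable ℝ fun y : E => (τ, y))) _
    have h2 : DifferentiableAt ℝ (X τ t) y :=
      ((hY.differentiable one_ne_zero).comp
        (by fun_prop : Differentiable ℝ fun y : E => (τ, y))) y
    exact h1.hasFDerivAt.comp y h2.hasFDerivAt
  have hFc : ∀ y, Continuous fun τ => v (τ, X τ t y) := fun y =>
    hvc.comp (continuous_id.prodMk (hYc.comp (by fun_prop : Continuous fun τ : ℝ => (τ, y))))
  have hF'x : ∀ y, Continuous (F' y) := fun y =>
    hF'c.comp (by fun_prop : Continuous fun τ : ℝ => (τ, y))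
  have hint : ∀ r y, X r t y = y + ∫ τ in t..r, v (τ, X τ t y) := by
    intro r y
    rw [intervalIntegral.integral_eq_sub_of_hasDerivAt (fun τ _ => hXd τ t y)
      ((hFc y).intervalIntegrable _ _), hX0]
    abel
  have key : ∀ r, fderiv ℝ (X r t) x =
      ContinuousLinearMap.id ℝ E + ∫ τ in t..r, F' x τ := by
    intro r
    obtain ⟨C, hC⟩ := ((isCompact_uIcc (a := t) (b := r)).prod
      (isCompact_closedBall x 1)).exists_bound_of_continuousOn hF'c.continuousOn
    have h := intervalIntegral.hasFDerivAt_integral_of_dominated_of_fderiv_le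
      (μ := volume) (F := fun y τ => v (τ, X τ t y)) (F' := F') (x₀ := x) (a := t) (b := r)
      (bound := fun _ => C)
      (Metric.closedBall_mem_nhds x one_pos)
      (Filter.Eventually.of_forall fun y => (hFc y).aestronglyMeasurable)
      ((hFc x).intervalIntegrable _ _)
      (hF'x x).aestronglyMeasurable
      (Filter.Eventually.of_forall fun τ hτ y hy =>
        hC (τ, y) ⟨Set.uIoc_subset_uIcc hτ, hy⟩)
      intervalIntegrable_const
      (Filter.Eventually.of_forall fun τ _ y _ => hdiff τ y)
    have h' := (hasFDerivAt_id x).add h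
    rw [show X r t = fun y => y + ∫ τ in t..r, v (τ, X τ t y) from funext (hint r)]
    exact h'.fderiv
  rw [show (fun s => fderiv ℝ (X s t) x) = fun r =>
      ContinuousLinearMap.id ℝ E + ∫ τ in t..r, F' x τ from funext key]
  exact ((hF'x x).integral_hasStrictDerivAt t s).hasDerivAt.const_add _

/-- Liouville's formula for the Jacobian determinant of the flow. -/
lemma det_fderiv_flow {v : ℝ × E → E} (hv : ContDiff ℝ 1 v) {X : ℝ → ℝ → E → E}
    (hXsm : ContDiff ℝ 1 (fun q : ℝ × ℝ × E => X q.1 q.2.1 q.2.2))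
    (hX0 : ∀ t₀ x, X t₀ t₀ x = x)
    (hXd : ∀ t t₀ x, HasDerivAt (fun s => X s t₀ x) (v (t, X t t₀ x)) t) (t s : ℝ) (x : E) :
    (fderiv ℝ (X s t) x).det = Real.exp (∫ τ in t..s, divv v τ (X τ t x)) := by
  have hYc := (contDiff_flow_slice hXsm t).continuous
  have hdc : Continuous fun τ => divv v τ (X τ t x) := by
    have h : Continuous fun p : ℝ × E =>
        LinearMap.trace ℝ E (fderiv ℝ (fun y => v (p.1, y)) p.2) := by
      have hl : Continuous ((LinearMap.trace ℝ E).comp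
          (ContinuousLinearMap.coeLM ℝ : (E →L[ℝ] E) →ₗ[ℝ] (E →ₗ[ℝ] E))) :=
        LinearMap.continuous_of_finiteDimensional _
      exact hl.comp (continuous_fderiv_field hv)
    simp_rw [divv_eq_trace hv]
    exact h.comp (continuous_id.prodMk
      (hYc.comp (by fun_prop : Continuous fun τ : ℝ => (τ, x))))
  set g : ℝ → ℝ := fun r => ∫ τ in t..r, divv v τ (X τ t x) with hg
  have hgd : ∀ r, HasDerivAt g (divv v r (X r t x)) r := fun r =>
    (hdc.integral_hasStrictDerivAt t r).hasDerivAt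
  have hdet : ∀ r, HasDerivAt (fun r => (fderiv ℝ (X r t) x).det)
      (divv v r (X r t x) * (fderiv ℝ (X r t) x).det) r := fun r => by
    rw [divv_eq_trace hv]
    exact hasDerivAt_det_of_comp (hasDerivAt_fderiv_flow hv hXsm hX0 hXd t r x)
  have hprod : ∀ r, HasDerivAt
      (fun r => (fderiv ℝ (X r t) x).det * Real.exp (-g r)) 0 r := fun r =>
    ((hdet r).mul (hgd r).neg.exp).congr_deriv (by simp only [Pi.neg_apply]; ring)
  have hconst := is_const_of_deriv_eq_zero (fun r => (hprod r).differentiableAt)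
    (fun r => (hprod r).deriv) s t
  have hid : X t t = id := funext (hX0 t)
  have ht : (fderiv ℝ (X t t) x).det = 1 := by
    rw [hid, fderiv_id]
    exact LinearMap.det_id
  have hgt : g t = 0 := by simp [hg]
  rw [ht, hgt, Real.exp_neg] at hconst
  change _ = Real.exp (g s)
  have := Real.exp_pos (g s)
  field_simp at hconst
  simpa using hconst

end Flow

theorem stmt_17 {n : ℕ} (hn : 1 ≤ n)
    (v : ℝ × EuclideanSpace ℝ (Fin n) → EuclideanSpace ℝ (Fin n))
    (hv : ContDiff ℝ 1 v)
    (hvbd : ∃ C : ℝ, ∀ p, ‖v p‖ ≤ C ∧ ‖fderiv ℝ v p‖ ≤ C)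
    (X : ℝ → ℝ → EuclideanSpace ℝ (Fin n) → EuclideanSpace ℝ (Fin n))
    (hXsm : ContDiff ℝ 1
      (fun q : ℝ × ℝ × EuclideanSpace ℝ (Fin n) => X q.1 q.2.1 q.2.2))
    (hX0 : ∀ t₀ x, X t₀ t₀ x = x)
    (hXd : ∀ t t₀ x, HasDerivAt (fun s => X s t₀ x) (v (t, X t t₀ x)) t)
    (hXc : ∀ t₂ t₁ t₀ x, X t₂ t₁ (X t₁ t₀ x) = X t₂ t₀ x)
    (ρ₀ : EuclideanSpace ℝ (Fin n) → ℝ) (hρ₀ : Integrable ρ₀)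
    (ρ : ℝ → EuclideanSpace ℝ (Fin n) → ℝ)
    (hρdef : ∀ t x, ρ t x =
      ρ₀ (X 0 t x) * Real.exp (-(∫ τ in (0 : ℝ)..t, divv v τ (X τ t x)))) :
    ∀ t : ℝ, Integrable (ρ t) ∧ ∫ x, |ρ t x| = ∫ x, |ρ₀ x| := by
  intro t
  have hdet : ∀ x, |(fderiv ℝ (X 0 t) x).det| =
      Real.exp (-(∫ τ in (0 : ℝ)..t, divv v τ (X τ t x))) := fun x => by
    rw [det_fderiv_flow hv hXsm hX0 hXd, abs_of_pos (Real.exp_pos _),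
      intervalIntegral.integral_symm]
  have hdiff : Differentiable ℝ (X 0 t) :=
    ((contDiff_flow_slice hXsm t).differentiable one_ne_zero).comp
      (by fun_prop : Differentiable ℝ fun y : EuclideanSpace ℝ (Fin n) => ((0 : ℝ), y))
  have hinv : Function.LeftInverse (X t 0) (X 0 t) := fun x => by rw [hXc, hX0]
  have hsurj : Function.Surjective (X 0 t) := fun y => ⟨X t 0 y, by rw [hXc, hX0]⟩
  have hf' : ∀ x ∈ Set.univ, HasFDerivWithinAt (X 0 t) (fderiv ℝ (X 0 t) x) Set.univ x :=
    fun x _ => (hdiff x).hasFDerivAt.hasFDerivWithinAt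
  have hρ : ∀ x, ρ t x = |(fderiv ℝ (X 0 t) x).det| • ρ₀ (X 0 t x) := fun x => by
    rw [hρdef, hdet, smul_eq_mul, mul_comm]
  constructor
  · have h := integrableOn_image_iff_integrableOn_abs_det_fderiv_smul volume MeasurableSet.univ
      hf' hinv.injective.injOn ρ₀
    rw [Set.image_univ, hsurj.range_eq, integrableOn_univ, integrableOn_univ] at h
    rw [funext hρ]
    exact h.1 hρ₀
  · have h := integral_image_eq_integral_abs_det_fderiv_smul volume MeasurableSet.univ
      hf' hinv.injective.injOn (fun x => |ρ₀ x|)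
    rw [Set.image_univ, hsurj.range_eq, setIntegral_univ, setIntegral_univ] at h
    rw [h]
    simp only [hρ, smul_eq_mul, abs_mul, abs_abs]
end
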